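/- arXiv:2505.18684 — 4 statements merged into one kernel-verified Lean document; each statement's English description precedes it below -/
import Mathlib

section
/- Let P ∈ ℝ^{p×p} and R ∈ ℝ^{q×q} be symmetric positive definite, let H ∈ ℝ^{q×p}, and set S = H P Hᵀ + R. Then for all m₀, x ∈ ℝ^p and z ∈ ℝ^q, (z − H x)ᵀ R⁻¹ (z − H x) + (x − m₀)ᵀ P⁻¹ (x − m₀) = (x − μ)ᵀ (P⁻¹ + Hᵀ R⁻¹ H) (x − μ) + (z − H m₀)ᵀ S⁻¹ (z − H m₀), where μ = m₀ + P Hᵀ S⁻¹ (z − H m₀). -/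
/-!
In the coordinates `w = S⁻¹ (z - H m₀)` and `d = x - μ` the three residuals are
`z - H m₀ = H P Hᵀ w + R w`, `x - m₀ = d + P Hᵀ w` and `z - H x = R w - H d`.
Substituting these, the cross terms `-2 w ⬝ H d` and `2 d ⬝ Hᵀ w` on the left cancel, and what is
left on both sides is `dᵀ P⁻¹ d + (H d)ᵀ R⁻¹ (H d) + wᵀ (H P Hᵀ + R) w`. Positive definiteness
enters through the symmetry of `P` and `R` and the invertibility of `P`, `R` and `S`.
-/

open Matrix

/-- A positive definite matrix, being symmetric and invertible, cancels against its inverse across the dot product. -/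
lemma mulVec_dotProduct_inv_mulVec {n : ℕ} {A : Matrix (Fin n) (Fin n) ℝ} (hA : A.PosDef)
    (u v : Fin n → ℝ) : (A *ᵥ u) ⬝ᵥ (A⁻¹ *ᵥ v) = u ⬝ᵥ v := by
  have hT : Aᵀ = A := by simpa [conjTranspose_eq_transpose_of_trivial] using hA.isHermitian.eq
  have hdet : IsUnit A.det := hA.det_pos.ne'.isUnit
  rw [← vecMul_transpose, hT, ← dotProduct_mulVec, mulVec_mulVec, mul_nonsing_inv _ hdet,
    one_mulVec]

/-- Completion-of-squares identity behind the Kalman/Bayes update: for SPD `P`, `R`,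
any `H`, and `S = H P Hᵀ + R`,
`(z − Hx)ᵀ R⁻¹ (z − Hx) + (x − m₀)ᵀ P⁻¹ (x − m₀)
  = (x − μ)ᵀ (P⁻¹ + Hᵀ R⁻¹ H) (x − μ) + (z − H m₀)ᵀ S⁻¹ (z − H m₀)`
where `μ = m₀ + P Hᵀ S⁻¹ (z − H m₀)`. -/
theorem kalman_complete_square
    (p q : ℕ)
    (P : Matrix (Fin p) (Fin p) ℝ) (R : Matrix (Fin q) (Fin q) ℝ)
    (hP : P.PosDef) (hR : R.PosDef)
    (H : Matrix (Fin q) (Fin p) ℝ)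
    (S : Matrix (Fin q) (Fin q) ℝ) (hS : S = H * P * Hᵀ + R)
    (m₀ x : Fin p → ℝ) (z : Fin q → ℝ)
    (μ : Fin p → ℝ) (hμ : μ = m₀ + (P * Hᵀ * S⁻¹) *ᵥ (z - H *ᵥ m₀)) :
    (z - H *ᵥ x) ⬝ᵥ (R⁻¹ *ᵥ (z - H *ᵥ x)) + (x - m₀) ⬝ᵥ (P⁻¹ *ᵥ (x - m₀)) =
      (x - μ) ⬝ᵥ ((P⁻¹ + Hᵀ * R⁻¹ * H) *ᵥ (x - μ)) +
        (z - H *ᵥ m₀) ⬝ᵥ (S⁻¹ *ᵥ (z - H *ᵥ m₀)) := by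
  have hRu : IsUnit R.det := hR.det_pos.ne'.isUnit
  have hPu : IsUnit P.det := hP.det_pos.ne'.isUnit
  have hSu : IsUnit S.det := by
    have hHPH : (H * P * Hᵀ).PosSemidef := by
      simpa [conjTranspose_eq_transpose_of_trivial] using
        hP.posSemidef.mul_mul_conjTranspose_same H
    have hSpos : S.PosDef := hS ▸ Matrix.PosDef.posSemidef_add hHPH hR
    exact hSpos.det_pos.ne'.isUnit
  obtain ⟨w, hw⟩ : ∃ w, w = S⁻¹ *ᵥ (z - H *ᵥ m₀) := ⟨_, rfl⟩
  obtain ⟨d, hd⟩ : ∃ d, d = x - μ := ⟨_, rfl⟩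
  obtain ⟨a, ha⟩ : ∃ a, a = Hᵀ *ᵥ w := ⟨_, rfl⟩
  obtain ⟨e, he⟩ : ∃ e, e = H *ᵥ d := ⟨_, rfl⟩
  have hinnov : z - H *ᵥ m₀ = H *ᵥ (P *ᵥ a) + R *ᵥ w := by
    have h : S *ᵥ w = z - H *ᵥ m₀ := by
      rw [hw, mulVec_mulVec, mul_nonsing_inv _ hSu, one_mulVec]
    rw [← h, hS, add_mulVec, ha]
    simp only [mulVec_mulVec, Matrix.mul_assoc]
  have hxm : x - m₀ = d + P *ᵥ a := by
    rw [hd, hμ, ha, hw]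
    simp only [mulVec_mulVec, Matrix.mul_assoc]
    abel
  have hzx : z - H *ᵥ x = R *ᵥ w - e := by
    have h : z - H *ᵥ x = (z - H *ᵥ m₀) - H *ᵥ (x - m₀) := by
      rw [mulVec_sub]; abel
    rw [h, hinnov, hxm, mulVec_add, he]
    abel
  have hadj (v : Fin p → ℝ) : (H *ᵥ v) ⬝ᵥ w = v ⬝ᵥ a := by
    rw [ha, dotProduct_mulVec, vecMul_transpose]
  have hRinv : R⁻¹ *ᵥ (R *ᵥ w) = w := by
    rw [mulVec_mulVec, nonsing_inv_mul _ hRu, one_mulVec]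
  have hPinv : P⁻¹ *ᵥ (P *ᵥ a) = a := by
    rw [mulVec_mulVec, nonsing_inv_mul _ hPu, one_mulVec]
  have hquad : d ⬝ᵥ ((Hᵀ * R⁻¹ * H) *ᵥ d) = e ⬝ᵥ (R⁻¹ *ᵥ e) := by
    rw [he, ← mulVec_mulVec, ← mulVec_mulVec, dotProduct_mulVec d Hᵀ, vecMul_transpose]
  have hew : e ⬝ᵥ w = d ⬝ᵥ a := by rw [he, hadj]
  rw [← hw, ← hd, hinnov, hxm, hzx, add_mulVec, dotProduct_add d, hquad,
    mulVec_sub, mulVec_add, hRinv, hPinv]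
  simp only [sub_dotProduct, dotProduct_sub, add_dotProduct, dotProduct_add,
    hadj,
    mulVec_dotProduct_inv_mulVec hR, mulVec_dotProduct_inv_mulVec hP]
  rw [dotProduct_comm w e, dotProduct_comm a d, hew]
  ring
end

section
/- Let P ∈ ℝ^{p×p} and R ∈ ℝ^{q×q} be symmetric positive definite and let H ∈ ℝ^{q×p}. Then the Kalman posterior covariance Σ_post = P − P Hᵀ (H P Hᵀ + R)⁻¹ H P is symmetric positive definite. -/
open Matrix

/-- The Kalman posterior covariance `Σ_post = P − P Hᵀ (H P Hᵀ + R)⁻¹ H P`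
is symmetric positive definite. -/
theorem kalman_posterior_posDef
    (p q : ℕ)
    (P : Matrix (Fin p) (Fin p) ℝ) (R : Matrix (Fin q) (Fin q) ℝ)
    (hP : P.PosDef) (hR : R.PosDef)
    (H : Matrix (Fin q) (Fin p) ℝ) :
    (P - P * Hᵀ * (H * P * Hᵀ + R)⁻¹ * H * P).PosDef := by
  have hS : (R + H * P * Hᵀ).PosDef := by
    simpa using hR.add_posSemidef (hP.posSemidef.mul_mul_conjTranspose_same H)
  have hInfo : (P⁻¹ + Hᵀ * R⁻¹ * H).PosDef := by
    simpa using hP.inv.add_posSemidef (hR.inv.posSemidef.conjTranspose_mul_mul_same H)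
  have hPP : P⁻¹⁻¹ = P := nonsing_inv_nonsing_inv P ((isUnit_iff_isUnit_det P).1 hP.isUnit)
  have hRR : R⁻¹⁻¹ = R := nonsing_inv_nonsing_inv R ((isUnit_iff_isUnit_det R).1 hR.isUnit)
  -- Woodbury: the posterior covariance is the inverse of the information matrix
  -- `P⁻¹ + Hᵀ R⁻¹ H`, which is a positive definite plus a positive semidefinite matrix.
  have hW := add_mul_mul_inv_eq_sub P⁻¹ Hᵀ R⁻¹ H hP.inv.isUnit hR.inv.isUnit
    (by rw [hPP, hRR]; exact hS.isUnit)
  rw [hPP, hRR, add_comm R] at hW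
  exact hW ▸ hInfo.inv
end

section
/- Let P ∈ ℝ^{p×p} and R ∈ ℝ^{q×q} be symmetric positive definite, let H ∈ ℝ^{q×p}, and set S = H P Hᵀ + R, μ = m₀ + P Hᵀ S⁻¹ (z − H m₀), and Σ_post = P − P Hᵀ S⁻¹ H P. Then for all m₀, x ∈ ℝ^p and z ∈ ℝ^q, the product of Gaussian densities satisfies the exact Bayes factorization N(z; H x, R) · N(x; m₀, P) = N(z; H m₀, S) · N(x; μ, Σ_post), where the first and third densities are on ℝ^q and the second and fourth are on ℝ^p. -/
/-!
Bayes' formula for a linear Gaussian model is a Schur complement computation.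

Both sides describe the joint Gaussian law of `(x, z)`, with covariance matrix
`[[P, P Hᵀ], [H P, S]]`. The Schur complement of the block `P` is `R` and that of the block `S` is
`Σ_post`, so the two block determinant formulas give `det P * det R = det S * det Σ_post`
(`det_mul_det_post`) and the normalizing constants agree. For the exponents, put `u = z - H m₀`,
`v = x - m₀` and `K = P Hᵀ S⁻¹`. Then `z - H x = u - H v` and `x - μ = v - K u`, and by the
Woodbury identity `Σ_post⁻¹ = P⁻¹ + Hᵀ R⁻¹ H` (`post_inv`). Completing the square
(`quadratic_form_identity`) comes down to `Σ_post⁻¹ K = Hᵀ R⁻¹` and `Kᵀ Hᵀ R⁻¹ = R⁻¹ - S⁻¹`.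
-/

open Matrix Real

/-- Multivariate Gaussian density on `ℝ^d` with mean `m` and covariance `Σ`. -/
noncomputable def gaussianPDF {d : ℕ} (m : Fin d → ℝ) (S : Matrix (Fin d) (Fin d) ℝ)
    (z : Fin d → ℝ) : ℝ :=
  (2 * Real.pi) ^ (-(d : ℝ) / 2) * S.det ^ (-(1 : ℝ) / 2) *
    Real.exp (-(1 / 2) * ((z - m) ⬝ᵥ (S⁻¹ *ᵥ (z - m))))

/-- The two Schur complement formulas for the determinant of the joint covariance matrix
`[[P, P Hᵀ], [H P, S]]`. -/
lemma det_mul_det_post {p q : ℕ} {P : Matrix (Fin p) (Fin p) ℝ} {R S : Matrix (Fin q) (Fin q) ℝ}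
    {H : Matrix (Fin q) (Fin p) ℝ} (hP : IsUnit P.det) (hS : IsUnit S.det)
    (h : S = H * P * Hᵀ + R) :
    P.det * R.det = S.det * (P - P * Hᵀ * S⁻¹ * H * P).det := by
  let _ : Invertible P := P.invertibleOfIsUnitDet hP
  let _ : Invertible S := S.invertibleOfIsUnitDet hS
  have h₁ := det_fromBlocks₁₁ P (P * Hᵀ) (H * P) S
  have h₂ := det_fromBlocks₂₂ P (P * Hᵀ) (H * P) S
  have hR : S - H * P * ⅟P * (P * Hᵀ) = R := by
    rw [Matrix.mul_invOf_cancel_right, ← Matrix.mul_assoc, h, add_sub_cancel_left]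
  rw [hR] at h₁
  rw [invOf_eq_nonsing_inv, ← Matrix.mul_assoc] at h₂
  rw [← h₁, h₂]

/-- `S⁻¹ (H P Hᵀ) R⁻¹ = R⁻¹ - S⁻¹`, a form of the resolvent identity as `H P Hᵀ = S - R`. -/
lemma inv_mul_mul_inv {p q : ℕ} {P : Matrix (Fin p) (Fin p) ℝ} {R S : Matrix (Fin q) (Fin q) ℝ}
    {H : Matrix (Fin q) (Fin p) ℝ} (hR : IsUnit R.det) (hS : IsUnit S.det)
    (h : S = H * P * Hᵀ + R) :
    S⁻¹ * (H * P * Hᵀ) * R⁻¹ = R⁻¹ - S⁻¹ := by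
  rw [eq_sub_of_add_eq h.symm, Matrix.mul_sub, Matrix.sub_mul, nonsing_inv_mul _ hS,
    Matrix.one_mul, mul_nonsing_inv_cancel_right _ _ hR]

/-- The Woodbury identity: the posterior precision is `P⁻¹ + Hᵀ R⁻¹ H`. -/
lemma post_inv {p q : ℕ} {P : Matrix (Fin p) (Fin p) ℝ} {R S : Matrix (Fin q) (Fin q) ℝ}
    {H : Matrix (Fin q) (Fin p) ℝ} (hP : IsUnit P.det) (hR : IsUnit R.det) (hS : IsUnit S.det)
    (h : S = H * P * Hᵀ + R) :
    (P - P * Hᵀ * S⁻¹ * H * P)⁻¹ = P⁻¹ + Hᵀ * R⁻¹ * H := by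
  apply inv_eq_right_inv
  have e : P * Hᵀ * S⁻¹ * H * P * (Hᵀ * R⁻¹ * H)
      = P * Hᵀ * (S⁻¹ * (H * P * Hᵀ) * R⁻¹) * H := by
    simp only [Matrix.mul_assoc]
  rw [Matrix.sub_mul, Matrix.mul_add, Matrix.mul_add, e, inv_mul_mul_inv hR hS h,
    mul_nonsing_inv _ hP, mul_nonsing_inv_cancel_right _ _ hP]
  simp only [Matrix.mul_sub, Matrix.sub_mul, Matrix.mul_assoc]
  abel

/-- Completing the square in `v`, with gain `K = P Hᵀ S⁻¹` and precision `P⁻¹ + Hᵀ R⁻¹ H`. -/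
lemma quadratic_form_identity {p q : ℕ} {P : Matrix (Fin p) (Fin p) ℝ}
    {R S : Matrix (Fin q) (Fin q) ℝ} {H : Matrix (Fin q) (Fin p) ℝ}
    (hP : IsUnit P.det) (hR : IsUnit R.det) (hS : IsUnit S.det)
    (hPt : Pᵀ = P) (hRt : Rᵀ = R) (h : S = H * P * Hᵀ + R)
    (u : Fin q → ℝ) (v : Fin p → ℝ) :
    (u - H *ᵥ v) ⬝ᵥ (R⁻¹ *ᵥ (u - H *ᵥ v)) + v ⬝ᵥ (P⁻¹ *ᵥ v) =
      u ⬝ᵥ (S⁻¹ *ᵥ u) + (v - (P * Hᵀ * S⁻¹) *ᵥ u) ⬝ᵥ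
        ((P⁻¹ + Hᵀ * R⁻¹ * H) *ᵥ (v - (P * Hᵀ * S⁻¹) *ᵥ u)) := by
  have hSt : Sᵀ = S := by
    simp [h, hPt, hRt, Matrix.mul_assoc]
  have hRS := inv_mul_mul_inv hR hS h
  have adj : ∀ {m n : ℕ} (A : Matrix (Fin m) (Fin n) ℝ) (a : Fin n → ℝ) (b : Fin m → ℝ),
      (A *ᵥ a) ⬝ᵥ b = a ⬝ᵥ (Aᵀ *ᵥ b) := fun A a b => by
    rw [dotProduct_mulVec, vecMul_transpose]
  have hKt : (P * Hᵀ * S⁻¹)ᵀ = S⁻¹ * H * P := by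
    simp [transpose_nonsing_inv, hPt, hSt, Matrix.mul_assoc]
  have hJt : (P⁻¹ + Hᵀ * R⁻¹ * H)ᵀ = P⁻¹ + Hᵀ * R⁻¹ * H := by
    simp [transpose_nonsing_inv, hPt, hRt, Matrix.mul_assoc]
  have hKR : S⁻¹ * H * P * (Hᵀ * R⁻¹) = R⁻¹ - S⁻¹ := by
    rw [← hRS]; simp only [Matrix.mul_assoc]
  have hJK : (P⁻¹ + Hᵀ * R⁻¹ * H) * (P * Hᵀ * S⁻¹) = Hᵀ * R⁻¹ := by
    have e : R⁻¹ * (H * P * Hᵀ) * S⁻¹ = R⁻¹ - S⁻¹ := by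
      rw [eq_sub_of_add_eq h.symm, Matrix.mul_sub, Matrix.sub_mul, nonsing_inv_mul _ hR,
        Matrix.one_mul, mul_nonsing_inv_cancel_right _ _ hS]
    calc (P⁻¹ + Hᵀ * R⁻¹ * H) * (P * Hᵀ * S⁻¹)
        = P⁻¹ * P * (Hᵀ * S⁻¹) + Hᵀ * (R⁻¹ * (H * P * Hᵀ) * S⁻¹) := by
          simp only [Matrix.add_mul, Matrix.mul_assoc]
      _ = Hᵀ * R⁻¹ := by
          rw [e, nonsing_inv_mul _ hP, Matrix.one_mul, Matrix.mul_sub, add_sub_cancel]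
  have hKJ : S⁻¹ * H * P * (P⁻¹ + Hᵀ * R⁻¹ * H) = R⁻¹ * H := by
    rw [← hKt, ← hJt, ← transpose_mul, hJK, transpose_mul, transpose_transpose,
      transpose_nonsing_inv, hRt]
  -- The precision is kept as a single symbol until `K` has been eliminated, since its
  -- products with `K` simplify only as a whole.
  obtain ⟨J, hJ⟩ : ∃ J, J = P⁻¹ + Hᵀ * R⁻¹ * H := ⟨_, rfl⟩
  rw [← hJ] at hJK hKJ ⊢
  simp only [mulVec_sub, sub_dotProduct, dotProduct_sub, adj, mulVec_mulVec, hKt, hKJ, hJK, hKR,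
    sub_mulVec, ← Matrix.mul_assoc]
  rw [hJ, add_mulVec, dotProduct_add]
  ring

/-- Exact Bayes factorization of the product of Gaussian densities:
`N(z; Hx, R) · N(x; m₀, P) = N(z; H m₀, S) · N(x; μ, Σ_post)` with
`S = H P Hᵀ + R`, `μ = m₀ + P Hᵀ S⁻¹ (z − H m₀)`, `Σ_post = P − P Hᵀ S⁻¹ H P`. -/
theorem gaussian_bayes_factorization
    (p q : ℕ)
    (P : Matrix (Fin p) (Fin p) ℝ) (R : Matrix (Fin q) (Fin q) ℝ)
    (hP : P.PosDef) (hR : R.PosDef)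
    (H : Matrix (Fin q) (Fin p) ℝ)
    (S : Matrix (Fin q) (Fin q) ℝ) (hS : S = H * P * Hᵀ + R)
    (Spost : Matrix (Fin p) (Fin p) ℝ) (hSpost : Spost = P - P * Hᵀ * S⁻¹ * H * P)
    (m₀ x : Fin p → ℝ) (z : Fin q → ℝ)
    (μ : Fin p → ℝ) (hμ : μ = m₀ + (P * Hᵀ * S⁻¹) *ᵥ (z - H *ᵥ m₀)) :
    gaussianPDF (H *ᵥ x) R z * gaussianPDF m₀ P x =
      gaussianPDF (H *ᵥ m₀) S z * gaussianPDF μ Spost x := by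
  have hPt : Pᵀ = P := by simpa using hP.isHermitian.eq
  have hRt : Rᵀ = R := by simpa using hR.isHermitian.eq
  have hSpos : S.PosDef := by
    rw [hS, add_comm]
    have := hP.posSemidef.mul_mul_conjTranspose_same H
    rw [conjTranspose_eq_transpose_of_trivial] at this
    exact hR.add_posSemidef this
  have uP := hP.det_pos.ne'.isUnit
  have uR := hR.det_pos.ne'.isUnit
  have uS := hSpos.det_pos.ne'.isUnit
  have hdet := det_mul_det_post uP uS hS
  rw [← hSpost] at hdet
  have hpost : 0 ≤ Spost.det :=
    (pos_of_mul_pos_right (hdet ▸ mul_pos hP.det_pos hR.det_pos) hSpos.det_pos.le).le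
  have hpow : R.det ^ (-(1 : ℝ) / 2) * P.det ^ (-(1 : ℝ) / 2) =
      S.det ^ (-(1 : ℝ) / 2) * Spost.det ^ (-(1 : ℝ) / 2) := by
    rw [← mul_rpow hR.det_pos.le hP.det_pos.le, ← mul_rpow hSpos.det_pos.le hpost, ← hdet, mul_comm]
  have hz : z - H *ᵥ x = (z - H *ᵥ m₀) - H *ᵥ (x - m₀) := by
    rw [mulVec_sub]; abel
  have hx : x - μ = (x - m₀) - (P * Hᵀ * S⁻¹) *ᵥ (z - H *ᵥ m₀) := by
    rw [hμ]; abel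
  have hquad := quadratic_form_identity uP uR uS hPt hRt hS (z - H *ᵥ m₀) (x - m₀)
  rw [← hz, ← hx, ← post_inv uP uR uS hS, ← hSpost] at hquad
  have hexp := congrArg (fun t => Real.exp (-(1 / 2) * t)) hquad
  simp only [mul_add, Real.exp_add] at hexp
  unfold gaussianPDF
  linear_combination (2 * Real.pi) ^ (-(q : ℝ) / 2) * (2 * Real.pi) ^ (-(p : ℝ) / 2) *
    (R.det ^ (-(1 : ℝ) / 2) * P.det ^ (-(1 : ℝ) / 2) * hexp +
      Real.exp (-(1 / 2) * ((z - H *ᵥ m₀) ⬝ᵥ (S⁻¹ *ᵥ (z - H *ᵥ m₀)))) *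
        Real.exp (-(1 / 2) * ((x - μ) ⬝ᵥ (Spost⁻¹ *ᵥ (x - μ)))) * hpow)
end

section
/- Let x̂ denote the Kalman update μ = m₀ + P Hᵀ S⁻¹ (z − H m₀), where P ∈ ℝ^{p×p} and R ∈ ℝ^{q×q} are symmetric positive definite, H ∈ ℝ^{q×p}, S = H P Hᵀ + R, m₀ ∈ ℝ^p, and z ∈ ℝ^q. Then x̂ is the unique minimizer over x ∈ ℝ^p of the regularized least-squares objective J(x) = (z − H x)ᵀ R⁻¹ (z − H x) + (x − m₀)ᵀ P⁻¹ (x − m₀); that is, J(x̂) ≤ J(x) for all x, with equality only when x = x̂. -/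
/-!
Write `r = z - H x̂` and `d = x̂ - m₀`. With `w = S⁻¹ (z - H m₀)`, the definition of `S` gives
`r = R w`, and `d = P Hᵀ w`, so that `Hᵀ R⁻¹ r = Hᵀ w = P⁻¹ d`: these are the normal equations,
i.e. the gradient of `J` vanishes at `x̂`. Expanding the quadratic function `J` about `x̂`,
the linear term therefore disappears and
`J (x̂ + h) = J x̂ + (H h)ᵀ R⁻¹ (H h) + hᵀ P⁻¹ h`.
Since `R⁻¹` is positive semidefinite and `P⁻¹` positive definite, the increment is nonnegative and
vanishes only for `h = 0`.
-/

open Matrix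

theorem quadForm_add {n : ℕ} {A : Matrix (Fin n) (Fin n) ℝ} (hA : A.PosDef)
    (a b : Fin n → ℝ) :
    (a + b) ⬝ᵥ (A *ᵥ (a + b)) = a ⬝ᵥ (A *ᵥ a) + 2 * (b ⬝ᵥ (A *ᵥ a)) + b ⬝ᵥ (A *ᵥ b) := by
  have hT : Aᵀ = A := by simpa using hA.isHermitian.eq
  have hsymm : a ⬝ᵥ (A *ᵥ b) = b ⬝ᵥ (A *ᵥ a) := by
    rw [dotProduct_mulVec, ← mulVec_transpose, hT, dotProduct_comm]
  rw [mulVec_add, dotProduct_add, add_dotProduct, add_dotProduct, hsymm]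
  ring

/-- The Kalman update `x̂ = m₀ + P Hᵀ S⁻¹ (z − H m₀)` is the unique minimizer of the
regularized least-squares objective
`J(x) = (z − Hx)ᵀ R⁻¹ (z − Hx) + (x − m₀)ᵀ P⁻¹ (x − m₀)`. -/
theorem kalman_update_is_unique_minimizer
    (p q : ℕ)
    (P : Matrix (Fin p) (Fin p) ℝ) (R : Matrix (Fin q) (Fin q) ℝ)
    (hP : P.PosDef) (hR : R.PosDef)
    (H : Matrix (Fin q) (Fin p) ℝ)
    (S : Matrix (Fin q) (Fin q) ℝ) (hS : S = H * P * Hᵀ + R)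
    (m₀ : Fin p → ℝ) (z : Fin q → ℝ)
    (xhat : Fin p → ℝ) (hxhat : xhat = m₀ + (P * Hᵀ * S⁻¹) *ᵥ (z - H *ᵥ m₀))
    (J : (Fin p → ℝ) → ℝ)
    (hJ : ∀ x, J x = (z - H *ᵥ x) ⬝ᵥ (R⁻¹ *ᵥ (z - H *ᵥ x)) +
        (x - m₀) ⬝ᵥ (P⁻¹ *ᵥ (x - m₀))) :
    (∀ x, J xhat ≤ J x) ∧ (∀ x, J x = J xhat → x = xhat) := by
  have hSpd : S.PosDef := by
    have hHPH : (H * P * Hᵀ).PosSemidef := by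
      simpa using hP.posSemidef.mul_mul_conjTranspose_same H
    rw [hS, add_comm]
    exact hR.add_posSemidef hHPH
  have hSdet : IsUnit S.det := (isUnit_iff_isUnit_det S).mp hSpd.isUnit
  have hPdet : IsUnit P.det := (isUnit_iff_isUnit_det P).mp hP.isUnit
  have hRdet : IsUnit R.det := (isUnit_iff_isUnit_det R).mp hR.isUnit
  obtain ⟨w, hw⟩ : ∃ w, w = S⁻¹ *ᵥ (z - H *ᵥ m₀) := ⟨_, rfl⟩
  have hSw : S *ᵥ w = z - H *ᵥ m₀ := by
    rw [hw, mulVec_mulVec, mul_nonsing_inv S hSdet, one_mulVec]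
  have hd : xhat - m₀ = (P * Hᵀ) *ᵥ w := by
    rw [hxhat, add_sub_cancel_left, hw, mulVec_mulVec]
  have hr : z - H *ᵥ xhat = R *ᵥ w := by
    have hx : xhat = m₀ + (P * Hᵀ) *ᵥ w := by rw [← hd]; abel
    rw [hx, mulVec_add, ← sub_sub, ← hSw, hS, add_mulVec, mulVec_mulVec, Matrix.mul_assoc]
    abel
  have hRr : R⁻¹ *ᵥ (z - H *ᵥ xhat) = w := by
    rw [hr, mulVec_mulVec, nonsing_inv_mul R hRdet, one_mulVec]
  have hPd : P⁻¹ *ᵥ (xhat - m₀) = Hᵀ *ᵥ w := by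
    rw [hd, mulVec_mulVec, ← Matrix.mul_assoc, nonsing_inv_mul P hPdet, Matrix.one_mul]
  have key : ∀ x, J x = J xhat + (-(H *ᵥ (x - xhat))) ⬝ᵥ (R⁻¹ *ᵥ (-(H *ᵥ (x - xhat))))
      + (x - xhat) ⬝ᵥ (P⁻¹ *ᵥ (x - xhat)) := by
    intro x
    have e1 : z - H *ᵥ x = (z - H *ᵥ xhat) + -(H *ᵥ (x - xhat)) := by
      rw [mulVec_sub]; abel
    have e2 : x - m₀ = (xhat - m₀) + (x - xhat) := by abel
    -- The two cross terms `-(H h)ᵀ w` and `hᵀ Hᵀ w` cancel.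
    have e3 : (x - xhat) ⬝ᵥ (Hᵀ *ᵥ w) = (H *ᵥ (x - xhat)) ⬝ᵥ w := by
      rw [dotProduct_mulVec, vecMul_transpose]
    rw [hJ x, hJ xhat, e1, e2, quadForm_add hR.inv, quadForm_add hP.inv, hRr, hPd, e3,
      neg_dotProduct (H *ᵥ (x - xhat)) w]
    ring
  have hRnn : ∀ u, 0 ≤ u ⬝ᵥ (R⁻¹ *ᵥ u) := fun u => by
    simpa using hR.inv.posSemidef.dotProduct_mulVec_nonneg u
  have hPnn : ∀ u, 0 ≤ u ⬝ᵥ (P⁻¹ *ᵥ u) := fun u => by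
    simpa using hP.inv.posSemidef.dotProduct_mulVec_nonneg u
  refine ⟨fun x => ?_, fun x hx => ?_⟩
  · linarith [key x, hRnn (-(H *ᵥ (x - xhat))), hPnn (x - xhat)]
  · by_contra hne
    have hpos : 0 < (x - xhat) ⬝ᵥ (P⁻¹ *ᵥ (x - xhat)) := by
      simpa using hP.inv.dotProduct_mulVec_pos (sub_ne_zero.mpr hne)
    linarith [key x, hRnn (-(H *ᵥ (x - xhat)))]
end
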